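/- $\int_{0}^{\infty} \frac{t^{\alpha}\, dt}{\left(1 + t + t^{\alpha}\right)^{2}} = \frac{\alpha}{3}$, where $\alpha = \frac{1 + i\sqrt{3}}{2}$ and $t^{\alpha}$ denotes the principal complex power of the positive real number $t$. -/

import Mathlib

/-!
In the variable `u = log t` the integral becomes `I₁ = ∫ exp ((1 + α) u) / F(u)² du` over the real
line, with `F(u) = 1 + exp u + exp (α u)`. Put `I₂ = ∫ exp (α u) / F²` and `I₃ = ∫ exp u / F²`.

* Integrating the derivatives of `exp u / F` and `exp (α u) / F` gives `I₃ + (1 - α) I₁ = 1` and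
  `α I₂ + (α - 1) I₁ = 0` (`relation_one`, `relation_cexpo`).
* Since `α² = α - 1`, the rotation `u ↦ ω u` with `ω = α²` satisfies `F(ω u) = exp (-u) F(u)`, hence
  permutes the three integrands (`triF_neg`, `triG_neg`). The integrands are holomorphic and decay
  in the sector `0 ≤ arg u ≤ π/3`, so by Cauchy's theorem they have equal integrals along its two
  bounding rays (`ray_rotation`, resting on `triF_ne_zero`). By the symmetry the same holds in the
  two rotated sectors, and the three rotated copies of the line integral cancel:
  `I₁ + ω I₂ + ω² I₃ = 0`.

These three linear equations force `I₁ = α / 3` (`integral_triG`).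
-/

open Complex MeasureTheory Set Filter Topology

/-- The exponent `α = (1 + i√3)/2`, a primitive sixth root of unity. -/
noncomputable def cexpo : ℂ := (1 + Complex.I * Real.sqrt 3) / 2

/-- The denominator `1 + t + t ^ α` in the logarithmic variable `u = log t`. -/
noncomputable def triF (u : ℂ) : ℂ := 1 + exp u + exp (cexpo * u)

/-- The family of integrands `exp (p u) / (1 + exp u + exp (α u))²`; the values `p = 1 + α, α, 1`
are permuted by the rotation `u ↦ α² u`. -/
noncomputable def triG (p u : ℂ) : ℂ := exp (p * u) / triF u ^ 2

/-- The closed sector `0 ≤ arg u ≤ π/3`, bounded by the rays through `1` and `α`. -/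
def sector : Set ℂ := {u | 0 ≤ u.im ∧ u.im ≤ Real.sqrt 3 * u.re}

/-! ### The exponent and the sector -/

lemma cexpo_re : cexpo.re = 1 / 2 := by
  simp [cexpo]

lemma cexpo_im : cexpo.im = Real.sqrt 3 / 2 := by
  simp [cexpo]

lemma cexpo_sq : cexpo ^ 2 = cexpo - 1 := by
  have h : ((Real.sqrt 3 : ℝ) : ℂ) ^ 2 = 3 := by
    rw [← ofReal_pow, Real.sq_sqrt (by norm_num)]; norm_num
  unfold cexpo
  linear_combination (1 / 4 : ℂ) * Complex.I ^ 2 * h + (3 / 4 : ℂ) * Complex.I_sq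

lemma sqrt_three_sq : Real.sqrt 3 ^ 2 = 3 := Real.sq_sqrt (by norm_num)

lemma sqrt_three_pos : 0 < Real.sqrt 3 := by positivity

lemma sector_re_nonneg {u : ℂ} (hu : u ∈ sector) : 0 ≤ u.re := by
  have := sqrt_three_pos
  exact nonneg_of_mul_nonneg_right (hu.1.trans hu.2) this

lemma convex_sector : Convex ℝ sector := by
  have h1 : Convex ℝ {u : ℂ | 0 ≤ u.im} := convex_halfSpace_im_ge 0
  intro x hx y hy a b ha hb hab
  obtain ⟨hx1, hx2⟩ := hx
  obtain ⟨hy1, hy2⟩ := hy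
  refine ⟨h1 hx1 hy1 ha hb hab, ?_⟩
  simp only [add_im, add_re, real_smul, mul_im, mul_re, ofReal_re, ofReal_im]
  nlinarith [mul_le_mul_of_nonneg_left hx2 ha, mul_le_mul_of_nonneg_left hy2 hb]

lemma real_mem_sector {r : ℝ} (hr : 0 ≤ r) : (r : ℂ) ∈ sector := by
  constructor
  · simp
  · simp; positivity

lemma cexpo_mul_mem_sector {r : ℝ} (hr : 0 ≤ r) : cexpo * r ∈ sector := by
  have := sqrt_three_pos
  constructor
  · simp [cexpo_im]; positivity
  · simp [cexpo_im, cexpo_re]; linarith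

lemma cexpo_mul_re (u : ℂ) : (cexpo * u).re = u.re / 2 - Real.sqrt 3 / 2 * u.im := by
  rw [mul_re, cexpo_re, cexpo_im]; ring

lemma norm_exp_cexpo_le {u : ℂ} (hu : u ∈ sector) :
    ‖exp (cexpo * u)‖ ≤ Real.exp (u.re / 2) := by
  rw [norm_exp, cexpo_mul_re]
  have := mul_nonneg sqrt_three_pos.le hu.1
  exact Real.exp_le_exp.2 (by linarith)

/-! ### Bounds for the denominator and the integrands -/

/-- On the sector `|1 + exp u| > |exp (α u)|`. With `u = x + iy`, dividing squares by `exp x` this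
is `2 (cosh x + cos y) > exp (-√3 y)`, and `x ≥ y / √3` gives `cosh x ≥ 1 + y² / 6`. -/
lemma triF_ne_zero {u : ℂ} (hu : u ∈ sector) : triF u ≠ 0 := by
  intro h0
  have hx := sector_re_nonneg hu
  obtain ⟨hy1, hy2⟩ := hu
  have h1 : 1 + exp u = - exp (cexpo * u) := by
    unfold triF at h0; linear_combination h0
  have h2 : normSq (1 + exp u) = normSq (exp (cexpo * u)) := by rw [h1, normSq_neg]
  rw [normSq_eq_norm_sq (exp (cexpo * u)), norm_exp, cexpo_mul_re, normSq_apply] at h2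
  simp only [add_re, add_im, one_re, one_im, exp_re, exp_im] at h2
  have h3 : Real.exp (u.re / 2 - Real.sqrt 3 / 2 * u.im) ^ 2 ≤ Real.exp u.re := by
    rw [← Real.exp_nat_mul]
    have := mul_nonneg sqrt_three_pos.le hy1
    refine Real.exp_le_exp.2 ?_
    push_cast; linarith
  have hcs := Real.sin_sq_add_cos_sq u.im
  have h4 : 1 + 2 * Real.exp u.re * Real.cos u.im + Real.exp u.re ^ 2 ≤ Real.exp u.re := by
    nlinarith
  have hyx : u.im ^ 2 ≤ 3 * u.re ^ 2 := by
    calc u.im ^ 2 ≤ (Real.sqrt 3 * u.re) ^ 2 := by gcongr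
      _ = _ := by rw [mul_pow, sqrt_three_sq]
  have hcosh : 1 + u.re ^ 2 / 2 ≤ Real.cosh u.re := by
    have h1 : u.re / 2 ≤ Real.sinh (u.re / 2) := Real.self_le_sinh_iff.2 (by linarith)
    have h2 := Real.cosh_two_mul (u.re / 2)
    rw [mul_div_cancel₀ _ two_ne_zero, Real.cosh_sq] at h2
    nlinarith
  have h5 : 1 + Real.exp u.re ^ 2 = Real.exp u.re * (2 * Real.cosh u.re) := by
    rw [Real.cosh_eq, Real.exp_neg]
    field_simp
    ring
  have h6 : 2 * Real.cosh u.re + 2 * Real.cos u.im ≤ 1 := by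
    have hp := Real.exp_pos u.re
    refine le_of_mul_le_mul_left ?_ hp
    linarith
  have h7 := Real.one_sub_sq_div_two_le_cos (x := u.im)
  have h8 := Real.neg_one_le_cos u.im
  nlinarith

lemma le_norm_triF {u : ℂ} (hu : u ∈ sector) (h2 : 2 ≤ u.re) :
    Real.exp u.re / 4 ≤ ‖triF u‖ := by
  have h3 := norm_exp_cexpo_le hu
  have h4 : ‖exp u‖ ≤ ‖triF u‖ + 1 + ‖exp (cexpo * u)‖ := by
    have : exp u = triF u - 1 - exp (cexpo * u) := by unfold triF; ring
    calc ‖exp u‖ = ‖triF u - 1 - exp (cexpo * u)‖ := by rw [← this]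
      _ ≤ ‖triF u - 1‖ + ‖exp (cexpo * u)‖ := norm_sub_le _ _
      _ ≤ ‖triF u‖ + ‖(1 : ℂ)‖ + ‖exp (cexpo * u)‖ := by gcongr; exact norm_sub_le _ _
      _ = _ := by simp
  rw [norm_exp] at h4
  have h5 : Real.exp u.re = Real.exp (u.re / 2) ^ 2 := by
    rw [← Real.exp_nat_mul]; congr 1; push_cast; ring
  have h6 : 2 ≤ Real.exp (u.re / 2) := by
    have := Real.add_one_le_exp (u.re / 2); linarith
  nlinarith

/-- Admissible exponents: on the sector `|exp (p u)| ≤ exp (3/2 Re u)`, which the square of the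
denominator, of order `exp (2 Re u)`, dominates. -/
def Adm (p : ℂ) : Prop := ∀ u ∈ sector, (p * u).re ≤ 3 / 2 * u.re

lemma adm_one : Adm 1 := fun u hu ↦ by
  have := sector_re_nonneg hu
  rw [one_mul]; linarith

lemma adm_cexpo : Adm cexpo := fun u hu ↦ by
  have := sector_re_nonneg hu
  have := mul_nonneg sqrt_three_pos.le hu.1
  rw [cexpo_mul_re]; linarith

lemma adm_one_add : Adm (1 + cexpo) := fun u hu ↦ by
  have := mul_nonneg sqrt_three_pos.le hu.1
  rw [add_mul, add_re, cexpo_mul_re, one_mul]; linarith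

lemma norm_triG_le {p : ℂ} (hp : Adm p) {u : ℂ} (hu : u ∈ sector) (h2 : 2 ≤ u.re) :
    ‖triG p u‖ ≤ 16 * Real.exp (-(1 / 2) * u.re) := by
  have h := le_norm_triF hu h2
  have hp' : 0 < Real.exp u.re := Real.exp_pos _
  have hpos : 0 < ‖triF u‖ := norm_pos_iff.2 (triF_ne_zero hu)
  rw [triG, norm_div, norm_pow, norm_exp, div_le_iff₀ (by positivity)]
  calc Real.exp (p * u).re ≤ Real.exp (3 / 2 * u.re) := Real.exp_le_exp.2 (hp u hu)
    _ = 16 * Real.exp (-(1 / 2) * u.re) * (Real.exp u.re / 4) ^ 2 := by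
      have : Real.exp (3 / 2 * u.re) = Real.exp (-(1 / 2) * u.re) * Real.exp u.re ^ 2 := by
        rw [← Real.exp_nat_mul, ← Real.exp_add]; congr 1; push_cast; ring
      rw [this]; ring
    _ ≤ _ := by gcongr

lemma differentiable_triF : Differentiable ℂ triF := by
  unfold triF; fun_prop

lemma differentiableOn_triG (p : ℂ) : DifferentiableOn ℂ (triG p) sector := by
  intro u hu
  have h1 : DifferentiableAt ℂ triF u := differentiable_triF u
  have h2 := triF_ne_zero hu
  unfold triG
  exact (DifferentiableAt.div (by fun_prop) (h1.pow 2) (pow_ne_zero 2 h2)).differentiableWithinAt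

/-! ### Rotation of the ray of integration -/

/-- Along a ray `r ↦ c r` inside the sector with `Re c > 0` the integrand decays exponentially. -/
lemma integrableOn_ray {p c : ℂ} (hp : Adm p) (hc : ∀ r : ℝ, 0 ≤ r → c * r ∈ sector)
    (hre : 1 / 2 ≤ c.re) : IntegrableOn (fun r : ℝ ↦ triG p (c * r)) (Ioi 0) := by
  have hcont : ContinuousOn (fun r : ℝ ↦ triG p (c * r)) (Ici 0) :=
    (differentiableOn_triG p).continuousOn.comp (by fun_prop) fun r hr ↦ hc r hr
  refine (integrable_norm_iff
    ((hcont.mono Ioi_subset_Ici_self).aestronglyMeasurable measurableSet_Ioi)).1 ?_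
  refine integrable_of_isBigO_exp_neg (b := 1 / 4) (by norm_num) hcont.norm ?_
  refine Asymptotics.IsBigO.norm_left ?_
  refine Asymptotics.IsBigO.of_bound 16 ?_
  filter_upwards [eventually_ge_atTop (4 : ℝ)] with r hr
  have hr0 : 0 ≤ r := by linarith
  have hre' : (c * r).re = c.re * r := by simp
  refine (norm_triG_le hp (hc r hr0) (by rw [hre']; nlinarith)).trans ?_
  rw [Real.norm_of_nonneg (Real.exp_pos _).le]
  gcongr 16 * Real.exp ?_
  rw [hre']; nlinarith

/-- Along a ray in the sector, the integral is the limit of the increments of a primitive. -/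
lemma ray_ftc {G : ℂ → ℂ} {p c : ℂ} (hG : ∀ a ∈ sector, HasDerivWithinAt G (triG p a) sector a)
    (hp : Adm p) (hc : ∀ r : ℝ, 0 ≤ r → c * r ∈ sector) (hre : 1 / 2 ≤ c.re) :
    Tendsto (fun R : ℝ ↦ G (c * R) - G 0) atTop (𝓝 (c * ∫ r in Ioi (0 : ℝ), triG p (c * r))) := by
  have hint := integrableOn_ray hp hc hre
  have hlim := (intervalIntegral_tendsto_integral_Ioi 0 hint tendsto_id).const_mul c
  refine hlim.congr' ?_
  filter_upwards [eventually_ge_atTop (0 : ℝ)] with R hR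
  have hd : ∀ r : ℝ, 0 ≤ r →
      HasDerivWithinAt (fun r : ℝ ↦ G (c * r)) (c * triG p (c * r)) (Ici 0) r := by
    intro r hr
    have h1 : HasDerivWithinAt (fun r : ℝ ↦ c * (r : ℂ)) c (Ici 0) r := by
      simpa using ((hasDerivAt_id r).ofReal_comp.const_mul c).hasDerivWithinAt
    have h2 := (hG _ (hc r hr)).scomp r h1 (fun s hs ↦ hc s hs)
    simpa [Function.comp_def] using h2
  have := intervalIntegral.integral_eq_sub_of_hasDerivAt_of_le (a := 0) (b := R)
    (f := fun r : ℝ ↦ G (c * r)) (f' := fun r : ℝ ↦ c * triG p (c * r)) hR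
    (fun r hr ↦ ((hd r hr.1).continuousWithinAt).mono fun s hs ↦ hs.1)
    (fun r hr ↦ (hd r hr.1.le).hasDerivAt (Ici_mem_nhds hr.1))
    (((intervalIntegrable_iff_integrableOn_Ioc_of_le hR).2
      (hint.mono_set Ioc_subset_Ioi_self)).const_mul c)
  rw [intervalIntegral.integral_const_mul] at this
  simpa using this

/-- Rotating the ray of integration from `arg u = 0` to `arg u = π/3`: a primitive on the sector
differs at `R` and `α R` by at most `R` times the maximum of the integrand on the chord. -/
lemma ray_rotation {p : ℂ} (hp : Adm p) :
    ∫ r in Ioi (0 : ℝ), triG p r = cexpo * ∫ r in Ioi (0 : ℝ), triG p (cexpo * r) := by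
  obtain ⟨G, hG⟩ := convex_sector.exists_forall_hasDerivWithinAt (differentiableOn_triG p)
  have h1 := ray_ftc hG hp (c := 1) (fun r hr ↦ by simpa using real_mem_sector hr) (by norm_num)
  have h2 := ray_ftc hG hp (c := cexpo) (fun r hr ↦ cexpo_mul_mem_sector hr) cexpo_re.ge
  simp only [one_mul] at h1
  have h3 := h1.sub h2
  have h4 : Tendsto (fun R : ℝ ↦ (G R - G 0) - (G (cexpo * R) - G 0)) atTop (𝓝 0) := by
    have hz : Tendsto (fun R : ℝ ↦ 16 * ‖1 - cexpo‖ * (R * Real.exp (-(1 / 4) * R)))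
        atTop (𝓝 0) := by
      have := (tendsto_rpow_mul_exp_neg_mul_atTop_nhds_zero 1 (1 / 4) (by norm_num)).const_mul
        (16 * ‖1 - cexpo‖)
      simpa using this
    refine squeeze_zero_norm' ?_ hz
    filter_upwards [eventually_ge_atTop (4 : ℝ)] with R hR
    have hR0 : 0 ≤ R := by linarith
    have hconv : Convex ℝ (sector ∩ {u : ℂ | R / 2 ≤ u.re}) :=
      convex_sector.inter (convex_halfSpace_re_ge _)
    have key := hconv.norm_image_sub_le_of_norm_hasDerivWithin_le (f := G) (f' := triG p)
      (C := 16 * Real.exp (-(1 / 4) * R)) (x := cexpo * R) (y := R)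
      (fun x hx ↦ (hG x hx.1).mono inter_subset_left)
      (fun x hx ↦ by
        have hx2 : R / 2 ≤ x.re := hx.2
        refine (norm_triG_le hp hx.1 (by linarith)).trans ?_
        gcongr 16 * Real.exp ?_
        linarith)
      ⟨cexpo_mul_mem_sector hR0, by simp [cexpo_re]; linarith⟩
      ⟨real_mem_sector hR0, by simp; linarith⟩
    have e : (R : ℂ) - cexpo * R = (1 - cexpo) * R := by ring
    rw [e, norm_mul, norm_real, Real.norm_of_nonneg hR0] at key
    calc ‖(G R - G 0) - (G (cexpo * R) - G 0)‖ = ‖G R - G (cexpo * R)‖ := by rw [sub_sub_sub_cancel_right]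
      _ ≤ 16 * Real.exp (-(1 / 4) * R) * (‖1 - cexpo‖ * R) := key
      _ = 16 * ‖1 - cexpo‖ * (R * Real.exp (-(1 / 4) * R)) := by ring
  exact sub_eq_zero.1 (tendsto_nhds_unique h3 h4)

/-! ### The threefold symmetry -/

/-- The threefold symmetry, evaluated at `α u`, where `α² (α u) = -u`. -/
lemma triF_neg (u : ℂ) : triF (-u) = exp (-(cexpo * u)) * triF (cexpo * u) := by
  unfold triF
  have h : cexpo * (cexpo * u) = cexpo * u - u := by linear_combination u * cexpo_sq
  rw [h, mul_add, mul_add, ← Complex.exp_add, ← Complex.exp_add, mul_neg]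
  simp only [neg_add_cancel, exp_zero, mul_one]
  have : -(cexpo * u) + (cexpo * u - u) = -u := by ring
  rw [this]; ring

lemma triG_neg {p q : ℂ} (h : q * cexpo = 2 * cexpo - p) (u : ℂ) :
    triG p (-u) = triG q (cexpo * u) := by
  unfold triG
  have e : q * (cexpo * u) = p * -u + (cexpo * u + cexpo * u) := by linear_combination u * h
  rw [triF_neg, e, Complex.exp_add, Complex.exp_add, exp_neg (cexpo * u)]
  have := exp_ne_zero (cexpo * u)
  field_simp

lemma triF_real_ne_zero (r : ℝ) : triF r ≠ 0 := by
  rcases le_total 0 r with h | h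
  · exact triF_ne_zero (real_mem_sector h)
  · have := triF_ne_zero (cexpo_mul_mem_sector (neg_nonneg.2 h))
    have e : (r : ℂ) = -((-r : ℝ) : ℂ) := by simp
    rw [e, triF_neg]
    exact mul_ne_zero (exp_ne_zero _) this

lemma integrableOn_pos {p : ℂ} (hp : Adm p) :
    IntegrableOn (fun r : ℝ ↦ triG p r) (Ioi 0) := by
  simpa using integrableOn_ray hp (c := 1) (fun r hr ↦ by simpa using real_mem_sector hr)
    (by norm_num)

lemma integrableOn_neg {p q : ℂ} (hq : Adm q) (h : q * cexpo = 2 * cexpo - p) :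
    IntegrableOn (fun r : ℝ ↦ triG p (-r : ℝ)) (Ioi 0) := by
  have := integrableOn_ray hq (c := cexpo) (fun r hr ↦ cexpo_mul_mem_sector hr) cexpo_re.ge
  refine this.congr_fun (fun r _ ↦ ?_) measurableSet_Ioi
  simp only [ofReal_neg]
  rw [triG_neg h]

lemma integrable_triG {p q : ℂ} (hp : Adm p) (hq : Adm q) (h : q * cexpo = 2 * cexpo - p) :
    Integrable (fun r : ℝ ↦ triG p r) := by
  have h1 := integrableOn_pos hp
  have h2 : IntegrableOn (fun r : ℝ ↦ triG p r) (Iic 0) := by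
    have := (integrableOn_neg hq h)
    have h3 := (integrableOn_Ici_iff_integrableOn_Ioi (f := fun r : ℝ ↦ triG p (-r : ℝ))).2 this
    have h4 := (Measure.measurePreserving_neg (volume : Measure ℝ)).integrableOn_comp_preimage
      (Homeomorph.neg ℝ).measurableEmbedding (f := fun r : ℝ ↦ triG p r) (s := Iic 0)
    refine h4.1 ?_
    simpa [Function.comp_def] using h3
  rw [← integrableOn_univ, ← Iic_union_Ioi (a := (0 : ℝ))]
  exact h2.union h1

/-- The rotated ray `α r` for the exponent `q` is the negative half line for the exponent `p`. -/
lemma pos_eq_cexpo_mul_neg {p q : ℂ} (hq : Adm q) (h : q * cexpo = 2 * cexpo - p) :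
    ∫ r in Ioi (0 : ℝ), triG q r = cexpo * ∫ r in Iic (0 : ℝ), triG p r := by
  rw [ray_rotation hq]
  congr 1
  have := integral_comp_neg_Ioi (0 : ℝ) (fun r : ℝ ↦ triG p r)
  rw [neg_zero] at this
  rw [← this]
  refine setIntegral_congr_fun measurableSet_Ioi fun r _ ↦ ?_
  simp only [ofReal_neg]
  rw [triG_neg h]

lemma integral_split {p q : ℂ} (hp : Adm p) (hq : Adm q) (h : q * cexpo = 2 * cexpo - p) :
    ∫ r : ℝ, triG p r = (∫ r in Iic (0 : ℝ), triG p r) + ∫ r in Ioi (0 : ℝ), triG p r := by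
  have hi := integrable_triG hp hq h
  rw [← setIntegral_univ, ← Iic_union_Ioi (a := (0 : ℝ)),
    setIntegral_union (Iic_disjoint_Ioi le_rfl) measurableSet_Ioi hi.integrableOn hi.integrableOn]

lemma rot1 : (1 : ℂ) * cexpo = 2 * cexpo - cexpo := by ring
lemma rot2 : cexpo * cexpo = 2 * cexpo - (1 + cexpo) := by linear_combination cexpo_sq
lemma rot3 : (1 + cexpo) * cexpo = 2 * cexpo - 1 := by linear_combination cexpo_sq

/-! ### Two exact derivatives, and the linear system -/

lemma hasDerivAt_ofReal_exp (p : ℂ) (r : ℝ) :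
    HasDerivAt (fun r : ℝ ↦ exp (p * r)) (p * exp (p * r)) r := by
  have h1 : HasDerivAt (fun r : ℝ ↦ p * (r : ℂ)) p r := by
    simpa using (hasDerivAt_id r).ofReal_comp.const_mul p
  simpa [mul_comm] using h1.cexp

lemma hasDerivAt_triF (r : ℝ) :
    HasDerivAt (fun r : ℝ ↦ triF r) (exp r + cexpo * exp (cexpo * r)) r := by
  have h1 := hasDerivAt_ofReal_exp 1 r
  have h2 := hasDerivAt_ofReal_exp cexpo r
  simp only [one_mul] at h1
  exact (h1.const_add 1).add h2

lemma tendsto_exp_zero {p : ℂ} {l : Filter ℝ} (h : Tendsto (fun r : ℝ ↦ p.re * r) l atBot) :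
    Tendsto (fun r : ℝ ↦ exp (p * r)) l (𝓝 0) := by
  refine tendsto_exp_comap_re_atBot.comp (tendsto_comap_iff.2 ?_)
  simpa [Function.comp_def] using h

/-- At `+∞` the denominator is asymptotic to `exp r`. -/
lemma tendsto_div_atTop {p : ℂ} {L : ℂ}
    (h : Tendsto (fun r : ℝ ↦ exp ((p - 1) * r)) atTop (𝓝 L)) :
    Tendsto (fun r : ℝ ↦ exp (p * r) / triF r) atTop (𝓝 L) := by
  have h1 : Tendsto (fun r : ℝ ↦ exp ((-1 : ℂ) * r)) atTop (𝓝 0) := by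
    refine tendsto_exp_zero ?_
    simpa using tendsto_neg_atTop_atBot
  have h2 : Tendsto (fun r : ℝ ↦ exp ((cexpo - 1) * r)) atTop (𝓝 0) := by
    refine tendsto_exp_zero ?_
    rw [sub_re, cexpo_re, one_re]
    exact tendsto_id.const_mul_atTop_of_neg (by norm_num)
  have h3 : Tendsto (fun r : ℝ ↦ exp ((-1 : ℂ) * r) + 1 + exp ((cexpo - 1) * r)) atTop (𝓝 1) := by
    simpa using (h1.add_const 1).add h2
  have h4 := h.div h3 one_ne_zero
  rw [div_one] at h4
  refine h4.congr fun r ↦ ?_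
  have e : triF r = exp r * (exp ((-1 : ℂ) * r) + 1 + exp ((cexpo - 1) * r)) := by
    unfold triF
    rw [mul_add, mul_add, ← Complex.exp_add, ← Complex.exp_add, sub_mul, one_mul,
      add_sub_cancel, neg_one_mul, add_neg_cancel, exp_zero, mul_one]
  have e2 : exp (p * r) = exp r * exp ((p - 1) * r) := by
    rw [← Complex.exp_add]; ring_nf
  rw [e, e2]
  exact (mul_div_mul_left _ _ (exp_ne_zero _)).symm

lemma tendsto_div_atBot {p : ℂ} (hp : 0 < p.re) :
    Tendsto (fun r : ℝ ↦ exp (p * r) / triF r) atBot (𝓝 0) := by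
  have h0 : ∀ q : ℂ, 0 < q.re → Tendsto (fun r : ℝ ↦ exp (q * r)) atBot (𝓝 0) := fun q hq ↦
    tendsto_exp_zero (tendsto_id.const_mul_atBot hq)
  have h1 := h0 1 (by simp)
  have h2 := h0 cexpo (by rw [cexpo_re]; norm_num)
  have h3 : Tendsto (fun r : ℝ ↦ triF r) atBot (𝓝 1) := by
    simp only [one_mul] at h1
    simpa [triF] using (h1.const_add 1).add h2
  simpa [Pi.div_def] using (h0 p hp).div h3 one_ne_zero

/-- The integral over the line of the derivative of `exp r / F(r)`, which runs from `0` to `1`. -/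
lemma relation_one :
    (∫ r : ℝ, triG 1 r) + (1 - cexpo) * ∫ r : ℝ, triG (1 + cexpo) r = 1 := by
  have i1 := integrable_triG adm_one adm_one_add rot3
  have i2 := (integrable_triG adm_one_add adm_cexpo rot2).const_mul (1 - cexpo)
  have key := integral_of_hasDerivAt_of_tendsto (f := fun r : ℝ ↦ exp (1 * r) / triF r)
    (f' := fun r : ℝ ↦ triG 1 r + (1 - cexpo) * triG (1 + cexpo) r) (m := 0) (n := 1)
    (fun r ↦ ?_) (i1.add i2) (tendsto_div_atBot (by simp)) (tendsto_div_atTop (by simp))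
  · rw [integral_add i1 i2, integral_const_mul] at key
    rw [key]; ring
  · refine ((hasDerivAt_ofReal_exp 1 r).fun_div (hasDerivAt_triF r)
      (triF_real_ne_zero r)).congr_deriv ?_
    have := triF_real_ne_zero r
    simp only [triG, one_mul, add_mul, Complex.exp_add]
    field_simp
    simp only [triF]
    ring

/-- The integral over the line of the derivative of `exp (α r) / F(r)`, which vanishes at both
ends. -/
lemma relation_cexpo :
    cexpo * (∫ r : ℝ, triG cexpo r) + (cexpo - 1) * ∫ r : ℝ, triG (1 + cexpo) r = 0 := by
  have i1 := (integrable_triG adm_cexpo adm_one rot1).const_mul cexpo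
  have i2 := (integrable_triG adm_one_add adm_cexpo rot2).const_mul (cexpo - 1)
  have key := integral_of_hasDerivAt_of_tendsto (f := fun r : ℝ ↦ exp (cexpo * r) / triF r)
    (f' := fun r : ℝ ↦ cexpo * triG cexpo r + (cexpo - 1) * triG (1 + cexpo) r) (m := 0) (n := 0)
    (fun r ↦ ?_) (i1.add i2) (tendsto_div_atBot (by rw [cexpo_re]; norm_num))
    (tendsto_div_atTop (tendsto_exp_zero ?_))
  · rw [integral_add i1 i2, integral_const_mul, integral_const_mul] at key
    rw [key]; ring
  · refine ((hasDerivAt_ofReal_exp cexpo r).fun_div (hasDerivAt_triF r)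
      (triF_real_ne_zero r)).congr_deriv ?_
    have := triF_real_ne_zero r
    simp only [triG]
    rw [add_mul, Complex.exp_add]
    field_simp
    simp only [triF]
    ring
  · rw [sub_re, cexpo_re, one_re]
    exact tendsto_id.const_mul_atTop_of_neg (by norm_num)

lemma integral_triG : ∫ r : ℝ, triG (1 + cexpo) r = cexpo / 3 := by
  have e1 := relation_one
  have e2 := relation_cexpo
  have s1 := integral_split adm_one_add adm_cexpo rot2
  have s2 := integral_split adm_cexpo adm_one rot1
  have s3 := integral_split adm_one adm_one_add rot3
  have r1 := pos_eq_cexpo_mul_neg adm_one rot1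
  have r2 := pos_eq_cexpo_mul_neg adm_cexpo rot2
  have r3 := pos_eq_cexpo_mul_neg adm_one_add rot3
  rw [r3] at s1
  rw [r2] at s2
  rw [r1] at s3
  have hsq := cexpo_sq
  generalize (∫ r : ℝ, triG (1 + cexpo) r) = I1 at *
  generalize (∫ r : ℝ, triG cexpo r) = I2 at *
  generalize (∫ r : ℝ, triG 1 r) = I3 at *
  generalize (∫ r in Iic (0 : ℝ), triG (1 + cexpo) r) = N1 at *
  generalize (∫ r in Iic (0 : ℝ), triG cexpo r) = N2 at *
  generalize (∫ r in Iic (0 : ℝ), triG 1 r) = N3 at *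
  generalize cexpo = a at *
  -- the three rotated copies of the line integral add up to zero
  have hrot : I1 + (a - 1) * I2 - a * I3 = 0 := by
    rw [s1, s2, s3]
    linear_combination (N1 - N2) * hsq
  have hI2 : I2 = -a * I1 := by
    linear_combination (1 - a) * e2 + (I2 + I1) * hsq
  have hI3 : I3 = 1 - (1 - a) * I1 := by linear_combination e1
  rw [hI2, hI3] at hrot
  linear_combination (1 / 3 : ℂ) * hrot + (2 / 3 : ℂ) * I1 * hsq


/-- `∫₀^∞ t^α dt / (1 + t + t^α)² = α/3`, where `α = (1 + i√3)/2` and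
`t^α` is the principal complex power. -/
theorem stmt_8 :
    ∫ t in Set.Ioi (0 : ℝ),
        (t : ℂ) ^ ((1 + Complex.I * Real.sqrt 3) / 2) /
          (1 + (t : ℂ) + (t : ℂ) ^ ((1 + Complex.I * Real.sqrt 3) / 2)) ^ 2
      = (1 + Complex.I * Real.sqrt 3) / 2 / 3 := by
  -- Substituting `t = exp x` turns the integrand into `triG (1 + α)`.
  have himg : Ioi (0 : ℝ) = Real.exp '' univ := by rw [image_univ, Real.range_exp]
  rw [himg, integral_image_eq_integral_abs_deriv_smul MeasurableSet.univ
    (fun x _ ↦ (Real.hasDerivAt_exp x).hasDerivWithinAt) Real.exp_injective.injOn, setIntegral_univ]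
  refine Eq.trans (integral_congr_ae (ae_of_all _ fun x ↦ ?_)) integral_triG
  change |Real.exp x| • (((Real.exp x : ℝ) : ℂ) ^ cexpo /
    (1 + ((Real.exp x : ℝ) : ℂ) + ((Real.exp x : ℝ) : ℂ) ^ cexpo) ^ 2) = triG (1 + cexpo) x
  have h : ((Real.exp x : ℝ) : ℂ) ^ cexpo = exp (cexpo * x) := by
    rw [cpow_def_of_ne_zero (by exact_mod_cast (Real.exp_pos x).ne'), ← ofReal_log (Real.exp_pos x).le,
      Real.log_exp, mul_comm]
  rw [h, abs_of_pos (Real.exp_pos x), real_smul, triG, triF, add_mul, Complex.exp_add, one_mul,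
    ofReal_exp, mul_div_assoc]
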